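/- Let T be a rectangular fluctuating tableau with r rows and length n. Then (a) P^n(T) = T, and (b) E(T) = ε(T), where ε(T) is normalized to begin at (0,…,0). -/

import Mathlib

open scoped Classical

noncomputable section

namespace FT

/-- A (raw) `r`-row integer vector; generalized partitions are the antitone ones. -/
abbrev GP (r : ℕ) := Fin r → ℤ

/-- The weakly decreasing rearrangement of a tuple. -/
def sortDesc {r : ℕ} (α : GP r) : GP r := fun i => (α ∘ Tuple.sort α) i.rev

/-- Standard basis vector (0-indexed). -/
def eV {r : ℕ} (a : Fin r) : GP r := fun i => if i = a then 1 else 0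

/-- Standard basis vector with 1-indexed row `a` (zero if out of range). -/
def eN (r : ℕ) (a : ℕ) : GP r := fun i => if (i : ℕ) + 1 = a then 1 else 0

/-- Indicator vector of a set of rows. -/
def indV {r : ℕ} (S : Finset (Fin r)) : GP r := fun i => if i ∈ S then 1 else 0

/-- `colStep r c μ λ`: `λ` is obtained from `μ` by adding (if `c ≥ 0`) or removing
(if `c ≤ 0`) a skew column of `|c|` boxes. -/
def colStep (r : ℕ) (c : ℤ) (μ lam : GP r) : Prop :=
  ∃ S : Finset (Fin r), S.card = c.natAbs ∧
    (if 0 ≤ c then lam = μ + indV S else lam = μ - indV S)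

/-- Skew fluctuating tableau of length `n` and type `c` (recorded at indices `0,…,n`;
values of `T` and `c` beyond those indices are irrelevant). -/
def IsSkewFT (r n : ℕ) (T : ℕ → GP r) (c : ℕ → ℤ) : Prop :=
  (∀ k ≤ n, Antitone (T k)) ∧ ∀ j < n, colStep r (c j) (T j) (T (j + 1))

/-- (Non-skew) fluctuating tableau: starts at the empty shape. -/
def IsFT (r n : ℕ) (T : ℕ → GP r) (c : ℕ → ℤ) : Prop :=
  IsSkewFT r n T c ∧ T 0 = 0

/-- Rectangular: the final shape is constant. -/
def Rect (r n : ℕ) (T : ℕ → GP r) : Prop := ∃ m : ℤ, ∀ i, T n i = m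

/-- Bender–Knuth involution `BK_i` (for `1 ≤ i ≤ n-1`). -/
def BK {r : ℕ} (i : ℕ) (T : ℕ → GP r) : ℕ → GP r :=
  fun k => if k = i then sortDesc (T (i + 1) + T (i - 1) - T i) else T k

/-- `BKseg a m = BK (a+m-1) ∘ ⋯ ∘ BK a` (apply `BK a` first). -/
def BKseg {r : ℕ} (a : ℕ) : ℕ → (ℕ → GP r) → ℕ → GP r
  | 0 => id
  | m + 1 => BK (a + m) ∘ BKseg a m

/-- Promotion `P = BK_{n-1} ∘ ⋯ ∘ BK_1` on length-`n` tableaux. -/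
def promo {r : ℕ} (n : ℕ) (T : ℕ → GP r) : ℕ → GP r := BKseg 1 (n - 1) T

/-- `BKsegRev a m = BK a ∘ ⋯ ∘ BK (a+m-1)` (apply `BK (a+m-1)` first). -/
def BKsegRev {r : ℕ} (a : ℕ) : ℕ → (ℕ → GP r) → ℕ → GP r
  | 0 => id
  | m + 1 => BKsegRev a m ∘ BK (a + m)

/-- Inverse of promotion: `P⁻¹ = BK_1 ∘ ⋯ ∘ BK_{n-1}`. -/
def promoInv {r : ℕ} (n : ℕ) (T : ℕ → GP r) : ℕ → GP r := BKsegRev 1 (n - 1) T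

def evacAux {r : ℕ} : ℕ → (ℕ → GP r) → ℕ → GP r
  | 0, T => T
  | m + 1, T => evacAux m (BKseg 1 (m + 1) T)

/-- Evacuation `E = BK_1 ∘ (BK_2∘BK_1) ∘ ⋯ ∘ (BK_{n-1}∘⋯∘BK_1)`. -/
def evac {r : ℕ} (n : ℕ) (T : ℕ → GP r) : ℕ → GP r := evacAux (n - 1) T

def devacAux {r : ℕ} (n : ℕ) : ℕ → (ℕ → GP r) → ℕ → GP r
  | 0, T => T
  | m + 1, T => BKseg (n - (m + 1)) (m + 1) (devacAux n m T)

/-- Dual evacuation `E* = (BK_{n-1}∘⋯∘BK_1) ∘ (BK_{n-1}∘⋯∘BK_2) ∘ ⋯ ∘ BK_{n-1}`. -/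
def devac {r : ℕ} (n : ℕ) (T : ℕ → GP r) : ℕ → GP r := devacAux n (n - 1) T

/-- `rev(-v)`. -/
def revNeg {r : ℕ} (v : GP r) : GP r := fun i => - v i.rev

/-- Time reversal `τ`. -/
def tauT {r : ℕ} (n : ℕ) (T : ℕ → GP r) : ℕ → GP r := fun k => T (n - k)

/-- `ϖ`. -/
def varpiT {r : ℕ} (T : ℕ → GP r) : ℕ → GP r := fun k => revNeg (T k)

/-- `ε`. -/
def epsT {r : ℕ} (n : ℕ) (T : ℕ → GP r) : ℕ → GP r := fun k => revNeg (T (n - k))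

/-- Sign of the `j`-th step of `T` (paper indexing: step `j` goes from `λ^{j-1}` to `λ^j`). -/
def sgnStep {r : ℕ} (T : ℕ → GP r) (j : ℕ) : ℤ :=
  if T j = T (j - 1) then 0 else if T (j - 1) ≤ T j then 1 else -1

/-- The switch involution `toggle_j` (paper indexing, `1 ≤ j ≤ n`). -/
def toggleT {r : ℕ} (j : ℕ) (T : ℕ → GP r) : ℕ → GP r :=
  fun m => if m < j then T m else fun i => T m i - sgnStep T j

/-- Number of boxes added/removed in the step from `T j` to `T (j+1)`. -/
def stepSize {r : ℕ} (T : ℕ → GP r) (j : ℕ) : ℕ :=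
  (Finset.univ.filter fun i : Fin r => T (j + 1) i ≠ T j i).card

/-- Cumulative step sizes: position of `T j` inside the oscillization. -/
def cum {r : ℕ} (T : ℕ → GP r) (j : ℕ) : ℕ := ∑ j' ∈ Finset.range j, stepSize T j'

/-- The `j`-th intermediate shape of the oscillization of the skew-column step `μ → λ`:
boxes are added smallest-row-first and removed largest-row-first. -/
def oscStep {r : ℕ} (μ lam : GP r) (j : ℕ) : GP r := fun i =>
  let S := Finset.univ.filter fun i' : Fin r => lam i' ≠ μ i'
  if i ∈ S ∧ (if μ i < lam i then (S.filter fun i' => i' ≤ i).card ≤ j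
              else (S.filter fun i' => i ≤ i').card ≤ j)
  then lam i else μ i

/-- Largest index `j ≤ n` with `cum T j ≤ k`. -/
def stdIdx {r : ℕ} (n : ℕ) (T : ℕ → GP r) (k : ℕ) : ℕ :=
  ((Finset.range (n + 1)).filter fun j => cum T j ≤ k).sup id

/-- The oscillization `std(T)` of a length-`n` tableau, a tableau of length `t = Σ|c_j|`. -/
def stdT {r : ℕ} (n : ℕ) (T : ℕ → GP r) : ℕ → GP r := fun k =>
  if stdIdx n T k = n then T n
  else oscStep (T (stdIdx n T k)) (T (stdIdx n T k + 1)) (k - cum T (stdIdx n T k))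

/-- Rows of the promotion–evacuation growth diagram: `PE t S u` is `P^u(S)`
for a length-`t` (oscillating) tableau `S`. -/
def PE {r : ℕ} (t : ℕ) (S : ℕ → GP r) (u : ℕ) : ℕ → GP r := (promo t)^[u] S

/-- `i ∈ {1,…,r-1}` is recorded at cell `(u,v)` of the growth diagram of `S`
(rows 1-indexed; `λ^{u,v} = P^u(S)(v-u)`). -/
def recorded (r t : ℕ) (S : ℕ → GP r) (i u v : ℕ) : Prop :=
  ∃ a b : Fin r,
    (PE t S (u - 1) (v - u) = PE t S u (v - u - 1) + eV a ∧
     PE t S (u - 1) (v - u + 1) = PE t S u (v - u) + eV b ∧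
     (a : ℕ) < i ∧ i ≤ (b : ℕ))
    ∨
    (PE t S u (v - u - 1) = PE t S (u - 1) (v - u) + eV a ∧
     PE t S u (v - u) = PE t S (u - 1) (v - u + 1) + eV b ∧
     (b : ℕ) < i ∧ i ≤ (a : ℕ))

/-- `i ∈ PM(T)_{u,v}` for an off-diagonal entry of the promotion matrix of `T`
(`u, v ∈ {1,…,t}`, `1 ≤ i ≤ r-1`), using the oscillization `std(T)`. -/
def PMmem (r n t : ℕ) (T : ℕ → GP r) (i u v : ℕ) : Prop :=
  1 ≤ u ∧ u ≤ t ∧ 1 ≤ v ∧ v ≤ t ∧ u ≠ v ∧ 1 ≤ i ∧ i ≤ r - 1 ∧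
    recorded r t (stdT n T) i u (if u < v then v else v + t)

/-- Graph of the partial promotion function `prom_i(T)`: `prom_i(T)(u) = v`.
By convention `prom_0 = prom_r = id` on `{1,…,t}`. -/
def promRel (r n t : ℕ) (T : ℕ → GP r) (i u v : ℕ) : Prop :=
  if i = 0 ∨ i = r then 1 ≤ u ∧ u ≤ t ∧ u = v else PMmem r n t T i u v

/-- Sum of the first `i` entries (1-indexed prefix sums). -/
def pSum {r : ℕ} (v : GP r) (i : ℕ) : ℤ :=
  ∑ j ∈ Finset.univ.filter (fun j : Fin r => (j : ℕ) < i), v j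

/-- The filled oscillized local-rule grid: row index `k` counts down from the top row
(`k = 0` is `std(λ → ν)`), column index `q` goes right; the left column is
`std(κ → λ)` read so that `grid cA κ λ ν k 0 = std(κ→λ)` at position `cA - k`. -/
def grid {r : ℕ} (cA : ℕ) (κ lam ν : GP r) : ℕ → ℕ → GP r
  | 0, q => oscStep lam ν q
  | k + 1, 0 => oscStep κ lam (cA - (k + 1))
  | k + 1, q + 1 =>
      sortDesc (grid cA κ lam ν k (q + 1) + grid cA κ lam ν (k + 1) q -
        grid cA κ lam ν k q)
  termination_by k q => (k, q)

/-- 1-indexed entry of a vector (0 if out of range). -/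
def ent {r : ℕ} (v : GP r) (h : ℕ) : ℤ := if hh : h - 1 < r then v ⟨h - 1, hh⟩ else 0

/-- The chain `j_0 = 1, j_h = ` least `h`-balance point of the lattice word of `T`
weakly after `j_{h-1}` (in `{1,…,n}`), `none` once undefined. An index `j` is an
`h`-balance point iff `(T j)_h = (T j)_{h+1}` (1-indexed rows). -/
def jChain (r n : ℕ) (T : ℕ → GP r) : ℕ → Option ℕ
  | 0 => some 1
  | h + 1 =>
    match jChain r n T h with
    | none => none
    | some jp =>
      if H : ∃ j, jp ≤ j ∧ j ≤ n ∧ ent (T j) (h + 1) = ent (T j) (h + 2) then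
        some (Nat.find H)
      else none

/-- `k`: the largest `h ≤ r-1` such that `j_1, …, j_h` are all defined. -/
def kVal (r n : ℕ) (T : ℕ → GP r) : ℕ :=
  ((Finset.range r).filter fun h => (jChain r n T h).isSome).sup id

/-- `j_h`, defaulting to `0` when undefined. -/
def jval (r n : ℕ) (T : ℕ → GP r) (h : ℕ) : ℕ := (jChain r n T h).getD 0

/-- `ω_c` for `c ∈ {0,±1,…,±r}`: top-justified column of `c` ones if `c ≥ 0`,
bottom-justified column of `|c|` minus-ones if `c < 0`. -/
def omegaGP (r : ℕ) (c : ℤ) : GP r := fun i =>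
  if 0 ≤ c then (if (i : ℕ) < c.natAbs then 1 else 0)
  else (if r - c.natAbs ≤ (i : ℕ) then -1 else 0)

/-- The extremal fluctuating tableau of type `c`: partial sums of the `ω_{c_j}`. -/
def extremal (r : ℕ) (c : ℕ → ℤ) (k : ℕ) : GP r := ∑ j ∈ Finset.range k, omegaGP r (c j)

/-- Lexicographic order: the first nonzero entry of `β - α` is positive. -/
def ltLex {r : ℕ} (α β : GP r) : Prop := ∃ i : Fin r, (∀ j, j < i → α j = β j) ∧ α i < β i

/-- Cumulative sums of `|c_j|` (block boundaries). -/
def cumC (c : ℕ → ℤ) (j : ℕ) : ℕ := ∑ j' ∈ Finset.range j, (c j').natAbs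

/-- Entry `(u,v)` (for `u,v ∈ {1,…,n}`) of the reduced promotion matrix `PMr^i(T)`:
the number of cells in the block `B_u × B_v` whose promotion-matrix entry contains `i`. -/
def PMr (r n t : ℕ) (T : ℕ → GP r) (c : ℕ → ℤ) (i u v : ℕ) : ℕ :=
  (((Finset.Icc (cumC c (u - 1) + 1) (cumC c u)) ×ˢ
    (Finset.Icc (cumC c (v - 1) + 1) (cumC c v))).filter
      fun p => PMmem r n t T i p.1 p.2).card

/-- The set of `r`-row fluctuating tableaux of length `n`, shape `lam`, type `c`,
in bundled (finitely-indexed) form. -/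
def FTset (r n : ℕ) (lam : GP r) (c : Fin n → ℤ) : Set (Fin (n + 1) → GP r) :=
  {T | (∀ k, Antitone (T k)) ∧ T 0 = 0 ∧ T (Fin.last n) = lam ∧
       ∀ j : Fin n, colStep r (c j) (T j.castSucc) (T j.succ)}


/-! ### Auxiliary material for the proof -/

/-- Entries pairwise differ by at most one. -/
def Stp {r : ℕ} (v : GP r) : Prop := ∀ a b, v a ≤ v b + 1

/-- One (untruncated) row step of the growth diagram. -/
def prRow {r : ℕ} (X : ℕ → GP r) : ℕ → GP r
  | 0 => X 0
  | k + 1 => sortDesc (prRow X k + X (k + 2) - X (k + 1))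

lemma sortDesc_perm {r : ℕ} (α : GP r) : ∃ σ : Equiv.Perm (Fin r), sortDesc α = α ∘ σ :=
  ⟨Fin.revPerm.trans (Tuple.sort α), by funext i; simp [sortDesc]⟩

lemma sortDesc_antitone {r : ℕ} (α : GP r) : Antitone (sortDesc α) := by
  intro a b h
  exact Tuple.monotone_sort α (Fin.rev_le_rev.2 h)

lemma sortDesc_eq {r : ℕ} (α β : GP r) (hβ : Antitone β)
    (h : ∃ σ : Equiv.Perm (Fin r), β = α ∘ σ) : sortDesc α = β := by
  obtain ⟨σ, rfl⟩ := h
  obtain ⟨τ, h⟩ := sortDesc_perm α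
  have := sortDesc_antitone α
  rw [h] at this ⊢
  exact Tuple.unique_antitone this hβ

lemma antitone_of_adj {r : ℕ} (f : GP r)
    (h : ∀ i j : Fin r, (j : ℕ) = i + 1 → f j ≤ f i) : Antitone f := by
  have key : ∀ d : ℕ, ∀ i j : Fin r, (j : ℕ) = i + d → f j ≤ f i := by
    intro d
    induction d with
    | zero => intro i j hij; have : j = i := Fin.ext (by simpa using hij); rw [this]
    | succ d ih =>
      intro i j hij
      have hlt : (i : ℕ) + d < r := by have := j.2; omega
      exact (h ⟨i + d, hlt⟩ j (by simp; omega)).trans (ih i ⟨i + d, hlt⟩ rfl)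
  intro a b hab
  exact key (b - a) a b (by have : (a : ℕ) ≤ b := hab; omega)

lemma cell {r : ℕ} (κ ν S R : GP r) (hκ : Antitone κ) (hν : Antitone ν) (hS : Stp S)
    (hR : Stp R) (h : κ + S + R = ν) (P : GP r → Prop) (hP : P S)
    (hstep : ∀ (S : GP r) (i j : Fin r), (j : ℕ) = i + 1 → ν i = ν j → S i < S j → P S →
      P (S ∘ Equiv.swap i j)) :
    ∃ S' : GP r, P S' ∧ Stp S' ∧ Stp (ν - κ - S') ∧ Antitone (κ + S') ∧
      (∃ σ : Equiv.Perm (Fin r), κ + S' = (κ + S) ∘ σ) ∧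
      (∃ σ : Equiv.Perm (Fin r), ν - S' = (ν - S) ∘ σ) := by
  let Good : Equiv.Perm (Fin r) → Prop := fun σ =>
    P (S ∘ σ) ∧ Stp (ν - κ - S ∘ σ) ∧
      (∃ τ : Equiv.Perm (Fin r), κ + S ∘ σ = (κ + S) ∘ τ) ∧
      (∃ τ : Equiv.Perm (Fin r), ν - S ∘ σ = (ν - S) ∘ τ)
  have h1 : Good 1 := by
    refine ⟨hP, ?_, ⟨1, rfl⟩, ⟨1, rfl⟩⟩
    have : ν - κ - S ∘ (1 : Equiv.Perm (Fin r)) = R := by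
      funext x; simp [← h]; ring
    rw [this]; exact hR
  obtain ⟨σ, hσ, hmin⟩ := Finset.exists_min_image (Finset.univ.filter Good)
    (fun σ => ∑ x : Fin r, ((x : ℕ) : ℤ) * S (σ x)) ⟨1, by simp [h1]⟩
  simp only [Finset.mem_filter, Finset.mem_univ, true_and] at hσ hmin
  obtain ⟨g1, g2, ⟨τ, g3⟩, ⟨τ', g4⟩⟩ := hσ
  refine ⟨S ∘ σ, g1, fun a b => hS _ _, g2, ?_, ⟨τ, g3⟩, ⟨τ', g4⟩⟩
  apply antitone_of_adj
  intro i j hij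
  by_contra hlt
  push Not at hlt
  have hle : i ≤ j := by rw [Fin.le_def]; omega
  have a1 := hκ hle
  have a2 := hν hle
  have a3 := hS (σ j) (σ i)
  have a4 := g2 i j
  simp only [Pi.add_apply, Pi.sub_apply, Function.comp_apply] at hlt a4
  have b1 : κ i = κ j := by omega
  have b2 : ν i = ν j := by omega
  have b3 : S (σ i) < S (σ j) := by omega
  have sw : ∀ f : GP r, f i = f j → ∀ x, f (Equiv.swap i j x) = f x := by
    intro f hf x
    rcases eq_or_ne x i with rfl | hi
    · simp [hf]
    · rcases eq_or_ne x j with rfl | hj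
      · simp [hf]
      · rw [Equiv.swap_apply_of_ne_of_ne hi hj]
  have hne : i ≠ j := by intro e; rw [e] at hij; omega
  have hg : Good (σ * Equiv.swap i j) := by
    refine ⟨hstep (S ∘ σ) i j hij b2 b3 g1, ?_, ⟨τ * Equiv.swap i j, ?_⟩,
      ⟨τ' * Equiv.swap i j, ?_⟩⟩
    · intro a b
      have := g2 (Equiv.swap i j a) (Equiv.swap i j b)
      simpa [sw κ b1, sw ν b2] using this
    · funext x
      have := congrFun g3 (Equiv.swap i j x)
      simpa [sw κ b1] using this
    · funext x
      have := congrFun g4 (Equiv.swap i j x)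
      simpa [sw ν b2] using this
  have := hmin _ hg
  have e : ∑ x : Fin r, ((x : ℕ) : ℤ) * S ((σ * Equiv.swap i j) x)
      = ∑ x : Fin r, ((Equiv.swap i j x : Fin r) : ℤ) * S (σ x) := by
    rw [← Equiv.sum_comp (Equiv.swap i j)]
    simp
  rw [e, ← sub_nonneg, ← Finset.sum_sub_distrib] at this
  rw [← Finset.add_sum_erase _ _ (Finset.mem_univ i),
    ← Finset.add_sum_erase _ _ (Finset.mem_erase.2 ⟨hne.symm, Finset.mem_univ j⟩),
    Finset.sum_eq_zero] at this
  · simp only [Equiv.swap_apply_left, Equiv.swap_apply_right, hij] at this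
    push_cast at this
    nlinarith
  · intro x hx
    simp only [Finset.mem_erase, Finset.mem_univ, and_true] at hx
    rw [Equiv.swap_apply_of_ne_of_ne hx.2 hx.1]; simp

/-- Componentwise order on subsets of equal size (`J` lies above `I`). -/
def Le {r : ℕ} (J I : Finset (Fin r)) : Prop :=
  J.card = I.card ∧ ∀ f : GP r, Antitone f → ∑ x ∈ I, f x ≤ ∑ x ∈ J, f x

def Reach {r : ℕ} : List (GP r) → Finset (Fin r) → ℤ → Prop
  | [], _, s => s ≤ 0
  | S :: w, I, s => ∃ J, Le J I ∧ Reach w J (s - ∑ x ∈ J, S x)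

def Dom {r : ℕ} : GP r → List (GP r) → Prop
  | f, [] => Antitone f
  | f, S :: w => Antitone f ∧ Dom (f + S) w

lemma Dom.anti {r : ℕ} {f : GP r} {w : List (GP r)} (h : Dom f w) : Antitone f := by
  cases w with
  | nil => exact h
  | cons _ _ => exact h.1

lemma Reach.mono {r : ℕ} {w : List (GP r)} {I : Finset (Fin r)} {s t : ℤ}
    (h : Reach w I s) (hts : t ≤ s) : Reach w I t := by
  induction w generalizing I s t with
  | nil => exact hts.trans h
  | cons S w ih =>
    obtain ⟨J, hJ, h⟩ := h
    exact ⟨J, hJ, ih h (by linarith)⟩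

/-- Replace `j` by `i`. -/
def rep {r : ℕ} (i j : Fin r) (I : Finset (Fin r)) : Finset (Fin r) := insert i (I.erase j)

lemma rep_sum {r : ℕ} {i j : Fin r} {I : Finset (Fin r)} (hj : j ∈ I) (hi : i ∉ I) (f : GP r) :
    ∑ x ∈ rep i j I, f x = ∑ x ∈ I, f x + f i - f j := by
  rw [rep, Finset.sum_insert (by simp [hi]), ← Finset.add_sum_erase I f hj]; ring

lemma rep_card {r : ℕ} {i j : Fin r} {I : Finset (Fin r)} (hj : j ∈ I) (hi : i ∉ I) :
    (rep i j I).card = I.card := by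
  rw [rep, Finset.card_insert_of_notMem (by simp [hi]), Finset.card_erase_add_one hj]

lemma rep_le {r : ℕ} {i j : Fin r} {I J : Finset (Fin r)} (hij : i ≤ j) (hj : j ∈ J) (hi : i ∉ J)
    (h : Le J I) : Le (rep i j J) I := by
  refine ⟨(rep_card hj hi).trans h.1, fun f hf => ?_⟩
  rw [rep_sum hj hi]
  have := h.2 f hf
  have := hf hij
  linarith

lemma rep_le_rep {r : ℕ} {i j : Fin r} {I J : Finset (Fin r)} (hj : j ∈ J) (hi : i ∉ J)
    (hj' : j ∈ I) (hi' : i ∉ I) (h : Le J I) : Le (rep i j J) (rep i j I) := by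
  refine ⟨by rw [rep_card hj hi, rep_card hj' hi', h.1], fun f hf => ?_⟩
  rw [rep_sum hj hi, rep_sum hj' hi']
  have := h.2 f hf
  linarith

lemma le_rep {r : ℕ} {i j : Fin r} {I J : Finset (Fin r)} (hij : (j : ℕ) = i + 1)
    (hJ : ¬ (j ∈ J ∧ i ∉ J)) (hj : j ∈ I) (hi : i ∉ I) (h : Le J I) : Le J (rep i j I) := by
  refine ⟨by rw [rep_card hj hi, h.1], fun f hf => ?_⟩
  rw [rep_sum hj hi]
  have upd : ∀ (K : Finset (Fin r)) (a : Fin r) (c : ℤ), ∑ x ∈ K, Function.update f a c x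
      = ∑ x ∈ K, f x + if a ∈ K then c - f a else 0 := by
    intro K a c
    split_ifs with ha
    · rw [Finset.sum_update_of_mem ha, ← Finset.add_sum_erase K f ha, Finset.sdiff_singleton_eq_erase]
      ring
    · rw [Finset.sum_update_of_notMem ha]; ring
  by_cases hjJ : j ∈ J
  · have hiJ : i ∈ J := by tauto
    have := h.2 (Function.update f i (f j)) (by
      intro a b hab
      rw [Function.update_apply, Function.update_apply]
      rw [Fin.le_def] at hab
      split_ifs with h1 h2 h2
      · exact le_rfl
      · exact hf (by rw [Fin.le_def]; rw [h1] at hab; omega)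
      · apply hf; rw [Fin.le_def]; rw [h2] at hab
        have : (b : ℕ) ≠ i := fun e => h1 (Fin.ext e)
        omega
      · exact hf hab)
    rw [upd, upd, if_pos hiJ, if_neg hi] at this
    linarith
  · have := h.2 (Function.update f j (f i)) (by
      intro a b hab
      rw [Function.update_apply, Function.update_apply]
      rw [Fin.le_def] at hab
      split_ifs with h1 h2 h2
      · exact le_rfl
      · exact hf (by rw [Fin.le_def]; rw [h1] at hab; have : (a : ℕ) ≠ j := fun e => h2 (Fin.ext e); omega)
      · apply hf; rw [Fin.le_def]; rw [h2] at hab; omega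
      · exact hf hab)
    rw [upd, upd, if_pos hj, if_neg hjJ] at this
    linarith

lemma reach_rep {r : ℕ} {i j : Fin r} (hij : (j : ℕ) = i + 1) (w : List (GP r)) :
    ∀ (f : GP r) (I : Finset (Fin r)) (s : ℤ), Dom f w → j ∈ I → i ∉ I → Reach w I s →
      Reach w (rep i j I) (s - (f i - f j)) := by
  have hle : i ≤ j := by rw [Fin.le_def]; omega
  induction w with
  | nil =>
    intro f I s hd hj hi h
    have := hd hle
    change s ≤ 0 at h
    change s - (f i - f j) ≤ 0
    linarith
  | cons S w ih =>
    rintro f I s hd hj hi ⟨J, hJ, h⟩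
    by_cases hc : j ∈ J ∧ i ∉ J
    · refine ⟨rep i j J, rep_le_rep hc.1 hc.2 hj hi hJ, ?_⟩
      refine (ih _ _ _ hd.2 hc.1 hc.2 h).mono ?_
      rw [rep_sum hc.1 hc.2]
      simp only [Pi.add_apply]
      linarith
    · refine ⟨J, le_rep hij hc hj hi hJ, h.mono ?_⟩
      have := hd.1 hle
      linarith

lemma reach_head {r : ℕ} {i j : Fin r} (hij : (j : ℕ) = i + 1) (w : List (GP r)) (ν S : GP r)
    (I : Finset (Fin r)) (s : ℤ) (hd : Dom ν w) (hν : ν i = ν j) (hS : S i < S j)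
    (h : Reach (S :: w) I s) : Reach ((S ∘ Equiv.swap i j) :: w) I s := by
  have hle : i ≤ j := by rw [Fin.le_def]; omega
  have hne : i ≠ j := by intro e; rw [e] at hij; omega
  obtain ⟨J, hJ, h⟩ := h
  have hsum : ∑ x ∈ J, S (Equiv.swap i j x) = ∑ x ∈ J, S x + (if i ∈ J then S j - S i else 0)
      + (if j ∈ J then S i - S j else 0) := by
    rw [← Finset.sum_ite_eq' J i (fun _ => S j - S i), ← Finset.sum_ite_eq' J j (fun _ => S i - S j),
      ← Finset.sum_add_distrib, ← Finset.sum_add_distrib]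
    apply Finset.sum_congr rfl
    intro x _
    rcases eq_or_ne x i with rfl | hi
    · simp [hne]
    · rcases eq_or_ne x j with rfl | hj
      · simp [hne.symm]
      · rw [Equiv.swap_apply_of_ne_of_ne hi hj]; simp [hi, hj]
  by_cases hc : j ∈ J ∧ i ∉ J
  · refine ⟨rep i j J, rep_le hle hc.1 hc.2 hJ, ?_⟩
    refine (reach_rep hij w ν J _ hd hc.1 hc.2 h).mono ?_
    rw [rep_sum hc.1 hc.2]
    simp only [Function.comp_apply, hsum, if_pos hc.1, if_neg hc.2, Equiv.swap_apply_left,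
      Equiv.swap_apply_right]
    linarith
  · refine ⟨J, hJ, h.mono ?_⟩
    simp only [Function.comp_apply, hsum]
    by_cases h1 : j ∈ J
    · have : i ∈ J := by tauto
      simp only [h1, this, if_true]; linarith
    · by_cases h2 : i ∈ J
      · simp [h1, h2]; linarith
      · simp [h1, h2]

/-- Rows of the growth diagram. -/
structure Hyp {r : ℕ} (X : ℕ → GP r) (l : ℕ) : Prop where
  anti : ∀ j ≤ l, Antitone (X j)
  stp : ∀ j < l, Stp (X (j + 1) - X j)
  zero : X 0 = 0

/-- The consequences of the local rule in one cell. -/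
lemma cell' {r : ℕ} (κ lam ν : GP r) (hκ : Antitone κ) (hl : Antitone lam) (hν : Antitone ν)
    (hR : Stp (lam - κ)) (hS : Stp (ν - lam)) :
    Stp (sortDesc (κ + ν - lam) - κ) ∧ Stp (ν - sortDesc (κ + ν - lam)) ∧
    sortDesc (κ + ν - sortDesc (κ + ν - lam)) = lam ∧
    (∀ w I s, Dom ν w → Reach ((ν - lam) :: w) I s →
      Reach ((sortDesc (κ + ν - lam) - κ) :: w) I s) := by
  have key := fun P => cell κ ν (ν - lam) (lam - κ) hκ hν hS hR (by abel) P
  have eq : ∀ S' : GP r, Antitone (κ + S') →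
      (∃ σ : Equiv.Perm (Fin r), κ + S' = (κ + (ν - lam)) ∘ σ) →
      sortDesc (κ + ν - lam) = κ + S' := by
    intro S' h1 h2
    apply sortDesc_eq _ _ h1
    rwa [add_sub_assoc]
  refine ⟨?_, ?_, ?_, ?_⟩
  · obtain ⟨S', _, h1, h2, h3, h4, h5⟩ := key (fun _ => True) trivial (by simp)
    rw [eq S' h3 h4]; simpa using h1
  · obtain ⟨S', _, h1, h2, h3, h4, h5⟩ := key (fun _ => True) trivial (by simp)
    rw [eq S' h3 h4]; rwa [← sub_sub]
  · obtain ⟨S', _, h1, h2, h3, h4, ⟨σ, h5⟩⟩ := key (fun _ => True) trivial (by simp)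
    rw [eq S' h3 h4]
    apply sortDesc_eq _ _ hl
    refine ⟨σ⁻¹, ?_⟩
    have e : κ + ν - (κ + S') = ν - S' := by abel
    rw [e, h5]
    funext x; simp
  · intro w I s hd hr
    obtain ⟨S', h0, h1, h2, h3, h4, h5⟩ := key (fun S => Reach (S :: w) I s) hr
      (fun S i j hij hνij hSij h => reach_head hij w ν S I s hd hνij hSij h)
    rw [eq S' h3 h4]; simpa using h0

lemma row_basic {r : ℕ} {X : ℕ → GP r} {l : ℕ} (h : Hyp X (l + 1)) :
    ∀ j ≤ l, Antitone (prRow X j) ∧ Stp (X (j + 1) - prRow X j) := by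
  intro j
  induction j with
  | zero => intro _; exact ⟨h.anti 0 (by omega), h.stp 0 (by omega)⟩
  | succ j ih =>
    intro hj
    obtain ⟨h1, h2⟩ := ih (by omega)
    refine ⟨sortDesc_antitone _, ?_⟩
    exact (cell' (prRow X j) (X (j + 1)) (X (j + 2)) h1 (h.anti _ (by omega)) (h.anti _ (by omega))
      h2 (h.stp _ (by omega))).2.1

lemma row_cell {r : ℕ} {X : ℕ → GP r} {l : ℕ} (h : Hyp X (l + 1)) (j : ℕ) (hj : j < l) :
    Stp (prRow X (j + 1) - prRow X j) ∧
    sortDesc (prRow X j + X (j + 2) - prRow X (j + 1)) = X (j + 1) ∧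
    (∀ w I s, Dom (X (j + 2)) w → Reach ((X (j + 2) - X (j + 1)) :: w) I s →
      Reach ((prRow X (j + 1) - prRow X j) :: w) I s) := by
  obtain ⟨h1, h2⟩ := row_basic h j (by omega)
  have := cell' (prRow X j) (X (j + 1)) (X (j + 2)) h1 (h.anti _ (by omega)) (h.anti _ (by omega))
      h2 (h.stp _ (by omega))
  exact ⟨this.1, this.2.2.1, this.2.2.2⟩

lemma row_hyp {r : ℕ} {X : ℕ → GP r} {l : ℕ} (h : Hyp X (l + 1)) : Hyp (prRow X) l :=
  ⟨fun j hj => (row_basic h j hj).1, fun j hj => (row_cell h j hj).1, h.zero⟩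

lemma iter_hyp {r : ℕ} (u : ℕ) : ∀ {X : ℕ → GP r} {l : ℕ}, Hyp X (l + u) → Hyp (prRow^[u] X) l := by
  induction u with
  | zero => intro X l h; exact h
  | succ u ih => intro X l h; exact ih (row_hyp h)

/-- The word of steps of a row. -/
def word {r : ℕ} (X : ℕ → GP r) : ℕ → ℕ → List (GP r)
  | _, 0 => []
  | j, l + 1 => (X (j + 1) - X j) :: word X (j + 1) l

lemma word_dom {r : ℕ} (X : ℕ → GP r) (l : ℕ) : ∀ j, (∀ k ≤ j + l, Antitone (X k)) →
    Dom (X j) (word X j l) := by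
  induction l with
  | zero => intro j h; exact h j (by omega)
  | succ l ih =>
    intro j h
    refine ⟨h j (by omega), ?_⟩
    rw [add_sub_cancel]
    exact ih _ (fun k hk => h k (by omega))

lemma reach_row {r : ℕ} {X : ℕ → GP r} {n : ℕ} (h : Hyp X (n + 1)) (l : ℕ) :
    ∀ j I s, j + l ≤ n → Reach (word X (j + 1) l) I s → Reach (word (prRow X) j l) I s := by
  induction l with
  | zero => intro j I s _ h; exact h
  | succ l ih =>
    intro j I s hj hr
    obtain ⟨J, hJ, h'⟩ := (row_cell h j (by omega)).2.2 _ I s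
      (word_dom X l (j + 2) (fun k hk => h.anti k (by omega))) hr
    exact ⟨J, hJ, ih _ _ _ (by omega) h'⟩

lemma reach_iter {r : ℕ} (u : ℕ) : ∀ {X : ℕ → GP r} {l I s}, Hyp X (l + u) →
    Reach (word X u l) I s → Reach (word (prRow^[u] X) 0 l) I s := by
  induction u with
  | zero => intro X l I s _ h; exact h
  | succ u ih =>
    intro X l I s hX h
    exact ih (row_hyp hX) (reach_row (n := l + u) hX l u I s (by omega) h)

/-- The first `p` rows. -/
def top (r p : ℕ) : Finset (Fin r) := Finset.univ.filter fun i => (i : ℕ) < p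

lemma le_top {r : ℕ} (I : Finset (Fin r)) (f : GP r) (hf : Antitone f) :
    ∑ x ∈ I, f x ≤ ∑ x ∈ top r I.card, f x := by
  have hcr : I.card ≤ r := by simpa using I.card_le_univ
  have hct : (top r I.card).card = I.card := by
    rw [top, Fin.card_filter_val_lt]; omega
  rcases Nat.eq_zero_or_pos I.card with h0 | hpos
  · rw [Finset.card_eq_zero.1 h0]; simp [top]
  · set p := I.card with hp
    let t : ℤ := f ⟨p - 1, by omega⟩
    have h1 : ∑ x ∈ I, (f x - t) ≤ ∑ x ∈ top r p, (f x - t) := by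
      have e1 := Finset.sum_inter_add_sum_sdiff I (top r p) (fun x => f x - t)
      have e2 := Finset.sum_inter_add_sum_sdiff (top r p) I (fun x => f x - t)
      rw [Finset.inter_comm] at e2
      have e3 : ∑ x ∈ I \ top r p, (f x - t) ≤ 0 := by
        apply Finset.sum_nonpos
        intro x hx
        simp only [Finset.mem_sdiff, top, Finset.mem_filter, Finset.mem_univ, true_and] at hx
        have : f x ≤ t := hf (by rw [Fin.le_def]; simp; omega)
        linarith
      have e4 : 0 ≤ ∑ x ∈ top r p \ I, (f x - t) := by
        apply Finset.sum_nonneg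
        intro x hx
        simp only [Finset.mem_sdiff, top, Finset.mem_filter, Finset.mem_univ, true_and] at hx
        have : t ≤ f x := hf (by rw [Fin.le_def]; simp; omega)
        linarith
      linarith
    simp only [Finset.sum_sub_distrib, Finset.sum_const, hct, ← hp] at h1
    linarith

lemma reach_bound {r : ℕ} (X : ℕ → GP r) (l : ℕ) : ∀ j I s, (∀ k ≤ j + l, Antitone (X k)) →
    Reach (word X j l) I s → s + ∑ x ∈ I, X j x ≤ ∑ x ∈ top r I.card, X (j + l) x := by
  induction l with
  | zero =>
    intro j I s h hr
    have hr' : s ≤ 0 := hr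
    have := le_top I (X j) (h j (by omega))
    simp only [Nat.add_zero]
    linarith
  | succ l ih =>
    rintro j I s h ⟨J, hJ, hr⟩
    have a := ih (j + 1) J _ (fun k hk => h k (by omega)) hr
    have b := hJ.2 (X j) (h j (by omega))
    rw [hJ.1, show j + 1 + l = j + (l + 1) by omega] at a
    simp only [Pi.sub_apply, Finset.sum_sub_distrib] at a
    linarith

lemma reach_const {r : ℕ} (X : ℕ → GP r) (I : Finset (Fin r)) (l : ℕ) : ∀ j,
    Reach (word X j l) I (∑ x ∈ I, X (j + l) x - ∑ x ∈ I, X j x) := by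
  induction l with
  | zero => intro j; show _ ≤ (0 : ℤ); simp
  | succ l ih =>
    intro j
    refine ⟨I, ⟨rfl, fun _ _ => le_rfl⟩, (ih (j + 1)).mono ?_⟩
    rw [show j + 1 + l = j + (l + 1) by omega]
    simp only [Pi.sub_apply, Finset.sum_sub_distrib]
    linarith

/-- The key dominance inequality. -/
lemma club {r : ℕ} {X : ℕ → GP r} {l k : ℕ} (h : Hyp X (l + k)) (I : Finset (Fin r)) :
    ∑ x ∈ I, X (l + k) x - ∑ x ∈ I, X k x ≤ ∑ x ∈ top r I.card, (prRow^[k] X) l x := by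
  have h1 := reach_iter k h (reach_const X I l k)
  have hh := iter_hyp k h
  have h2 := reach_bound _ l 0 I _ (fun j hj => hh.anti j (by omega)) h1
  rw [hh.zero] at h2
  simp only [Pi.zero_apply, Finset.sum_const_zero, add_zero, zero_add] at h2
  rwa [add_comm k l] at h2

lemma sum_sortDesc {r : ℕ} (α : GP r) : ∑ x, sortDesc α x = ∑ x, α x := by
  obtain ⟨σ, h⟩ := sortDesc_perm α
  rw [h]; exact Equiv.sum_comp σ α

lemma row_sum {r : ℕ} (X : ℕ → GP r) (j : ℕ) :
    ∑ x, prRow X j x + ∑ x, X 1 x = ∑ x, X (j + 1) x + ∑ x, X 0 x := by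
  induction j with
  | zero => simp only [prRow]; ring
  | succ j ih =>
    simp only [prRow, sum_sortDesc, Pi.add_apply, Pi.sub_apply, Finset.sum_add_distrib,
      Finset.sum_sub_distrib]
    linarith

lemma iter_zero {r : ℕ} (u : ℕ) : ∀ X : ℕ → GP r, (prRow^[u] X) 0 = X 0 := by
  induction u with
  | zero => intro X; rfl
  | succ u ih => intro X; rw [Function.iterate_succ_apply, ih]; rfl

lemma iter_sum {r : ℕ} (u : ℕ) : ∀ (X : ℕ → GP r) (j : ℕ), X 0 = 0 →
    ∑ x, (prRow^[u] X) j x = ∑ x, X (j + u) x - ∑ x, X u x := by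
  induction u with
  | zero => intro X j h; simp [h]
  | succ u ih =>
    intro X j h
    rw [Function.iterate_succ_apply, ih (prRow X) j h]
    have a := row_sum X (j + u)
    have b := row_sum X u
    rw [show j + (u + 1) = j + u + 1 by omega]
    linarith

/-- The flipped growth diagram. -/
lemma flip_iter {r : ℕ} {T : ℕ → GP r} {n : ℕ} (h : Hyp T n) (a : ℕ) : ∀ b, a + b ≤ n →
    (prRow^[a] (fun j => (prRow^[n - j] T) j)) b = (prRow^[n - a - b] T) b := by
  induction a with
  | zero => intro b _; rfl
  | succ a ih =>
    intro b
    induction b with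
    | zero => intro _; rw [iter_zero, iter_zero, iter_zero]
    | succ b ihb =>
      intro hb
      have i1 := ih (b + 1) (by omega)
      have i2 := ih (b + 2) (by omega)
      have i3 := ihb (by omega)
      rw [Function.iterate_succ_apply'] at i3 ⊢
      simp only [prRow]
      rw [i3, i1, i2]
      obtain ⟨e, he⟩ : ∃ e, n = e + a + b + 2 := ⟨n - a - b - 2, by omega⟩
      have hY : Hyp (prRow^[e] T) (a + b + 1 + 1) := iter_hyp e (by
        rw [show a + b + 1 + 1 + e = n by omega]; exact h)
      have := (row_cell hY b (by omega)).2.1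
      rw [show n - (a + 1) - b = e + 1 by omega, show n - a - (b + 2) = e by omega,
        show n - a - (b + 1) = e + 1 by omega, show n - (a + 1) - (b + 1) = e by omega,
        Function.iterate_succ_apply']
      exact this

lemma flip_hyp {r : ℕ} {T : ℕ → GP r} {n : ℕ} (h : Hyp T n) :
    Hyp (fun j => (prRow^[n - j] T) j) n := by
  refine ⟨fun j hj => ?_, fun j hj => ?_, ?_⟩
  · exact (iter_hyp (n - j) (l := j) (by rwa [show j + (n - j) = n by omega])).anti j le_rfl
  · have hY : Hyp (prRow^[n - (j + 1)] T) (j + 1) := iter_hyp _ (by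
      rwa [show j + 1 + (n - (j + 1)) = n by omega])
    have := (row_basic hY j le_rfl).2
    rw [← Function.iterate_succ_apply' prRow, show (n - (j + 1)).succ = n - j by omega] at this
    exact this
  · simp only [iter_zero]; exact h.zero

lemma sum_top_succ {r : ℕ} (f : GP r) (i : Fin r) :
    ∑ x ∈ top r (i + 1), f x = ∑ x ∈ top r i, f x + f i := by
  have : top r (i + 1) = insert i (top r i) := by
    ext x; simp only [top, Finset.mem_filter, Finset.mem_univ, true_and, Finset.mem_insert, Fin.ext_iff]
    omega
  rw [this, Finset.sum_insert (by simp [top])]; ring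

/-- Evacuation of rectangles, in terms of the growth diagram. -/
lemma main_rect {r : ℕ} {T : ℕ → GP r} {n : ℕ} {m : ℤ} (h : Hyp T n) (hm : ∀ i, T n i = m)
    (k : ℕ) (hk : k ≤ n) (i : Fin r) : (prRow^[k] T) (n - k) i = m - T k i.rev := by
  obtain ⟨l, rfl⟩ : ∃ l, n = l + k := ⟨n - k, by omega⟩
  have c1 := fun I => club h I
  have c2 := fun I => club (X := fun j => (prRow^[l + k - j] T) j) (l := k) (k := l)
    (by rw [add_comm k l]; exact flip_hyp h) I
  have e1 := flip_iter h l k le_rfl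
  have e2 := iter_sum k T l h.zero
  rw [show l + k - l - k = 0 by omega, Function.iterate_zero, id] at e1
  rw [e1] at c2
  simp only [show l + k - l = k by omega, add_comm k l, Nat.sub_self, Function.iterate_zero,
    id, hm, Finset.sum_const, Finset.card_univ, Fintype.card_fin, smul_eq_mul,
    nsmul_eq_mul] at c1 c2 e2
  rw [show l + k - k = l by omega]
  set C := (prRow^[k] T) l with hC
  set D := T k with hD
  have cardtop : ∀ p ≤ r, (top r p).card = p := by
    intro p hp; rw [top, Fin.card_filter_val_lt]; omega
  have cardc : ∀ p ≤ r, ((top r p)ᶜ).card = r - p := by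
    intro p hp; rw [Finset.card_compl, cardtop p hp, Fintype.card_fin]
  have key : ∀ p ≤ r, ∑ x ∈ top r p, C x = p * m - ∑ x, D x + ∑ x ∈ top r (r - p), D x := by
    intro p hp
    have a1 := c1 (top r (r - p))ᶜ
    have a2 := c2 (top r p)ᶜ
    rw [cardc _ (by omega)] at a1 a2
    rw [show r - (r - p) = p by omega] at a1
    have s1 := Finset.sum_add_sum_compl (top r (r - p)) D
    have s2 := Finset.sum_add_sum_compl (top r p) C
    have : ((r - p : ℕ) : ℤ) = r - p := by omega
    rw [this] at a2
    linarith
  have k1 := key i (by omega)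
  have k2 := key (i + 1) (by omega)
  have t1 := sum_top_succ C i
  have t2 := sum_top_succ D i.rev
  have v : (i.rev : ℕ) = r - (i + 1) := Fin.val_rev i
  rw [v, show r - ((i : ℕ) + 1) + 1 = r - i by omega] at t2
  push_cast at k2
  linarith

lemma BKseg_eq {r : ℕ} (X : ℕ → GP r) (q : ℕ) (k : ℕ) :
    BKseg 1 q X k = if k ≤ q then prRow X k else X k := by
  induction q generalizing k with
  | zero =>
    by_cases hk : k = 0
    · subst hk; rfl
    · simp [BKseg, hk]
  | succ q ih =>
    simp only [BKseg, Function.comp_apply, BK]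
    by_cases hk : k = 1 + q
    · subst hk
      rw [if_pos rfl, if_pos (by omega), ih, ih, ih, if_neg (by omega), if_pos (by omega),
        if_neg (by omega), show 1 + q = q + 1 by omega, prRow, Nat.add_sub_cancel,
        add_comm (prRow X q)]
    · rw [if_neg hk, ih]
      by_cases h : k ≤ q
      · rw [if_pos h, if_pos (by omega)]
      · rw [if_neg h, if_neg (by omega)]

lemma prRow_congr {r : ℕ} {X Y : ℕ → GP r} {l : ℕ} (h : ∀ j ≤ l + 1, X j = Y j) :
    ∀ j ≤ l, prRow X j = prRow Y j := by
  intro j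
  induction j with
  | zero => intro _; exact h 0 (by omega)
  | succ j ih =>
    intro hj
    rw [prRow, prRow, ih (by omega), h _ (by omega), h _ (by omega)]

lemma iter_congr {r : ℕ} (u : ℕ) : ∀ {X Y : ℕ → GP r} {l : ℕ}, (∀ j ≤ l + u, X j = Y j) →
    ∀ j ≤ l, (prRow^[u] X) j = (prRow^[u] Y) j := by
  induction u with
  | zero => intro X Y l h; exact h
  | succ u ih => intro X Y l h; exact ih (prRow_congr h)

lemma evacAux_eq {r : ℕ} (q : ℕ) : ∀ (X : ℕ → GP r) (k : ℕ),
    evacAux q X k = if k ≤ q + 1 then (prRow^[q + 1 - k] X) k else X k := by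
  induction q with
  | zero =>
    intro X k
    rw [evacAux]
    split_ifs with h
    · have : k = 0 ∨ k = 1 := by omega
      rcases this with rfl | rfl <;> rfl
    · rfl
  | succ q ih =>
    intro X k
    rw [evacAux, ih]
    by_cases h : k ≤ q + 1
    · rw [if_pos h, if_pos (by omega), show q + 1 + 1 - k = (q + 1 - k) + 1 by omega,
        Function.iterate_succ_apply]
      apply iter_congr (q + 1 - k) (l := k) _ k le_rfl
      intro j hj
      rw [BKseg_eq, if_pos (by omega)]
    · rw [if_neg h, BKseg_eq, if_neg h]
      split_ifs with h2
      · rw [show q + 1 + 1 - k = 0 by omega]; rfl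
      · rfl

lemma promo_hyp {r : ℕ} {X : ℕ → GP r} {l : ℕ} (h : Hyp X (l + 1)) : Hyp (promo (l + 1) X) (l + 1) := by
  have e : ∀ k, promo (l + 1) X k = if k ≤ l then prRow X k else X k := BKseg_eq X l
  refine ⟨fun j hj => ?_, fun j hj => ?_, ?_⟩
  · rw [e]; split_ifs with h1
    · exact (row_basic h j h1).1
    · exact h.anti j hj
  · rw [e, e, if_pos (show j ≤ l by omega)]
    split_ifs with h1
    · exact (row_cell h j h1).1
    · exact (row_basic h j (by omega)).2
  · rw [e, if_pos (by omega)]; exact h.zero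

lemma promo_ge {r : ℕ} (l u : ℕ) (X : ℕ → GP r) (k : ℕ) (hk : l + 1 ≤ k) :
    ((promo (l + 1))^[u] X) k = X k := by
  induction u with
  | zero => rfl
  | succ u ih =>
    rw [Function.iterate_succ_apply', promo, BKseg_eq, if_neg (by omega), ih]

lemma promo_iter_hyp {r : ℕ} {X : ℕ → GP r} {l : ℕ} (h : Hyp X (l + 1)) (u : ℕ) :
    Hyp ((promo (l + 1))^[u] X) (l + 1) := by
  induction u with
  | zero => exact h
  | succ u ih => rw [Function.iterate_succ_apply']; exact promo_hyp ih

lemma promo_iter_eq {r : ℕ} (l u : ℕ) : ∀ (X : ℕ → GP r) (k : ℕ), k + u ≤ l + 1 →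
    ((promo (l + 1))^[u] X) k = (prRow^[u] X) k := by
  induction u with
  | zero => intro X k _; rfl
  | succ u ih =>
    intro X k hk
    rw [Function.iterate_succ_apply, Function.iterate_succ_apply, ih _ _ (by omega)]
    apply iter_congr u (l := k) _ k le_rfl
    intro j hj
    rw [promo, BKseg_eq, if_pos (by omega)]

lemma hyp_of_isFT {r n : ℕ} {T : ℕ → GP r} {c : ℕ → ℤ} (hT : IsFT r n T c) : Hyp T n := by
  refine ⟨hT.1.1, fun j hj => ?_, hT.2⟩
  obtain ⟨S, _, h⟩ := hT.1.2 j hj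
  intro a b
  split_ifs at h <;> rw [h] <;> simp only [Pi.add_apply, Pi.sub_apply, indV] <;> split_ifs <;> omega

/-- **Theorem.** Let `T` be a rectangular fluctuating tableau with `r` rows, length `n`
and final shape `(m,…,m)`.  Then (a) `P^n(T) = T`, and (b) `E(T) = ε(T)` where `ε(T)`
is normalized (by adding `(m,…,m)`) so as to begin at `(0,…,0)`; concretely,
`E(T)^k_i = m - T^{n-k}_{rev(i)}` for all `0 ≤ k ≤ n`. -/
theorem promotion_order_and_evacuation
    (r n : ℕ) (T : ℕ → GP r) (c : ℕ → ℤ) (m : ℤ)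
    (hT : IsFT r n T c) (hrect : ∀ i, T n i = m) :
    (promo n)^[n] T = T ∧
    ∀ k ≤ n, ∀ i : Fin r, evac n T k i = m - T (n - k) i.rev := by
  have h := hyp_of_isFT hT
  cases n with
  | zero =>
    refine ⟨rfl, fun k hk i => ?_⟩
    obtain rfl : k = 0 := by omega
    have h0 := hrect i
    have h1 := hrect i.rev
    rw [h1]
    show T 0 i = _
    rw [hT.2] at h0 ⊢
    simp
  | succ l =>
    refine ⟨?_, fun k hk i => ?_⟩
    · funext v
      by_cases hv : l + 1 ≤ v
      · exact promo_ge l _ T v hv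
      · funext i
        have hX := promo_iter_hyp h v
        have hXm : ∀ i, ((promo (l + 1))^[v] T) (l + 1) i = m := by
          intro i; rw [promo_ge l v T _ le_rfl]; exact hrect i
        have a := main_rect hX hXm (l + 1 - v) (by omega) i
        have b := main_rect h hrect v (by omega) i.rev
        rw [← promo_iter_eq l _ _ _ (by omega), ← Function.iterate_add_apply,
          show l + 1 - v + v = l + 1 by omega, show l + 1 - (l + 1 - v) = v by omega,
          promo_iter_eq l v T _ (by omega), b, Fin.rev_rev] at a
        rw [a]; ring
    · show evacAux l T k i = _
      rw [evacAux_eq, if_pos hk]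
      have := main_rect h hrect (l + 1 - k) (by omega) i
      rwa [show l + 1 - (l + 1 - k) = k by omega] at this

end FT
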